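/- (Corollary 1, DR bi-criteria shortest path via scalarization) Let c ∈ ℝⁿ, α ∈ (0,1], ε ≥ 0, let ξ̂¹,…,ξ̂ᴺ ∈ ℝⁿ (N ≥ 1) with empirical distribution F_N, let P ⊆ {0,1}ⁿ be nonempty, and let λ̄₁, λ̄₂ ≥ 0 with λ̄₁ + λ̄₂ ≠ 0. Define W(v,t) = t + (1/α)·sup{ ∫ h(v,t,ξ) dμ(ξ) : μ a Borel probability measure on ℝⁿ with finite first moment and d_W(F_N,μ) ≤ ε }. Suppose (p̄, t̄, s̄, λ̄) minimizes λ̄₁·⟨c,p⟩ + λ̄₂·( t + (1/α)·((1/N)·Σ_{i=1}^N s_i + λ·ε) ) over all p ∈ P, t ∈ ℝ, s ∈ ℝᴺ, λ ∈ ℝ satisfying ⟨p,ξ̂ⁱ⟩ − t ≤ s_i, s_i ≥ 0 for all i, and ‖p‖_q ≤ λ. Then (p̄,t̄) is weakly robust efficient: for every p ∈ P and t ∈ ℝ, λ̄₁·⟨c,p⟩ + λ̄₂·W(p,t) ≥ λ̄₁·⟨c,p̄⟩ + λ̄₂·W(p̄,t̄). -/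

import Mathlib

open MeasureTheory Filter Topology
open scoped ENNReal BigOperators

/-- The ℓp norm on ℝⁿ, for `p ∈ [1,∞]` (an extended nonnegative real). -/
noncomputable def lpNorm {n : ℕ} (p : ℝ≥0∞) (x : Fin n → ℝ) : ℝ :=
  if p = ∞ then ⨆ i, |x i| else (∑ i, |x i| ^ p.toReal) ^ (1 / p.toReal)

/-- The Euclidean inner product on ℝⁿ. -/
def ip {n : ℕ} (w x : Fin n → ℝ) : ℝ := ∑ i, w i * x i


/-- `h(v,t,ξ) = max(⟨ξ,v⟩ − t, 0)`. -/
noncomputable def hfun {n : ℕ} (v : Fin n → ℝ) (t : ℝ) (ξ : Fin n → ℝ) : ℝ :=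
  max (ip ξ v - t) 0

/-- The empirical distribution `(1/N)·Σᵢ δ_{ξⁱ}` of `N` samples. -/
noncomputable def empirical {n : ℕ} (N : ℕ) (ξ : Fin N → Fin n → ℝ) :
    MeasureTheory.Measure (Fin n → ℝ) :=
  (N : ℝ≥0∞)⁻¹ • ∑ i, MeasureTheory.Measure.dirac (ξ i)

/-- The Wasserstein distance (valued in `ℝ≥0∞`) between two Borel probability measures
on ℝⁿ, with ground metric `‖·‖_p`: the infimum over couplings `K` (probability measures on
ℝⁿ × ℝⁿ with the prescribed marginals) of `∫ ‖x − y‖_p dK(x,y)`. -/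
noncomputable def dW {n : ℕ} (p : ℝ≥0∞) (μ ν : MeasureTheory.Measure (Fin n → ℝ)) : ℝ≥0∞ :=
  ⨅ (K : MeasureTheory.Measure ((Fin n → ℝ) × (Fin n → ℝ)))
    (_ : MeasureTheory.IsProbabilityMeasure K)
    (_ : K.map Prod.fst = μ) (_ : K.map Prod.snd = ν),
    ∫⁻ z, ENNReal.ofReal (lpNorm p (z.1 - z.2)) ∂K

/-- `W(v,t) = t + (1/α)·sup{∫ h(v,t,·) dμ : μ probability measure with finite first moment,
d_W(F_N,μ) ≤ ε}`. -/
noncomputable def Wobj {n : ℕ} (p : ℝ≥0∞) (α ε : ℝ) (N : ℕ) (ξ : Fin N → Fin n → ℝ)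
    (v : Fin n → ℝ) (t : ℝ) : ℝ :=
  t + (1 / α) * sSup {r : ℝ | ∃ μ : MeasureTheory.Measure (Fin n → ℝ),
    MeasureTheory.IsProbabilityMeasure μ ∧
    MeasureTheory.Integrable (fun x => lpNorm p x) μ ∧
    dW p (empirical N ξ) μ ≤ ENNReal.ofReal ε ∧ r = ∫ x, hfun v t x ∂μ}

/-!
For fixed `(v, t)` the hinge `hfun v t` is `‖v‖_q`-Lipschitz for `‖·‖_p` by Hölder, so on the
Wasserstein ball of radius `ε` around `μ` its mean is at most `∫ hfun v t dμ + ‖v‖_q ε`. The bound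
is sharp: let `u` be a unit vector with `⟨u, v⟩ = ‖v‖_q` and translate a fraction `δ` of the mass
by `(ε / δ) u`. This costs at most `ε`, while the moved mass gains `‖v‖_q ε` over the affine part
of the hinge, and the remaining error vanishes as `δ → 0`. Hence `W(v, t)` is the minimum over
`(s, λ)` of the second criterion of the convex program, and an optimum of the scalarized program
is an optimum of the scalarized robust problem.
-/

section LpDuality

variable {ι : Type*} [Fintype ι] (p : ℝ≥0∞) {q : ℝ≥0∞}

theorem dotProduct_le_norm_toLp_one_mul_norm_toLp_top (x y : ι → ℝ) :
    x ⬝ᵥ y ≤ ‖WithLp.toLp 1 x‖ * ‖WithLp.toLp ∞ y‖ := by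
  rw [PiLp.norm_eq_of_L1, Finset.sum_mul]
  refine Finset.sum_le_sum fun i _ ↦ (le_abs_self _).trans ?_
  rw [abs_mul]
  exact mul_le_mul_of_nonneg_left (PiLp.norm_apply_le (WithLp.toLp ∞ y) i) (abs_nonneg _)

theorem holderConjugate_toReal [p.HolderConjugate q] (hp : p ≠ ∞) (hq : q ≠ ∞) :
    p.toReal.HolderConjugate q.toReal := by
  have h := ENNReal.HolderTriple.toReal (p := p) (q := q) 1
    (ENNReal.toReal_pos (ENNReal.HolderConjugate.ne_zero p q) hp)
    (ENNReal.toReal_pos (ENNReal.HolderConjugate.ne_zero q p) hq)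
  rwa [ENNReal.toReal_one] at h

theorem norm_toLp_eq_sum_rpow {p : ℝ≥0∞} (hp : 0 < p.toReal) (x : ι → ℝ) :
    ‖WithLp.toLp p x‖ = (∑ i, |x i| ^ p.toReal) ^ (1 / p.toReal) :=
  PiLp.norm_eq_sum hp _

theorem dotProduct_le_norm_toLp_mul_norm_toLp [p.HolderConjugate q] (x y : ι → ℝ) :
    x ⬝ᵥ y ≤ ‖WithLp.toLp p x‖ * ‖WithLp.toLp q y‖ := by
  by_cases hp : p = ∞
  · obtain rfl : q = 1 := (ENNReal.HolderConjugate.eq_top_iff_eq_one p q).1 hp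
    subst hp
    rw [dotProduct_comm, mul_comm]
    exact dotProduct_le_norm_toLp_one_mul_norm_toLp_top y x
  by_cases hq : q = ∞
  · obtain rfl : p = 1 := (ENNReal.HolderConjugate.eq_top_iff_eq_one q p).1 hq
    subst hq
    exact dotProduct_le_norm_toLp_one_mul_norm_toLp_top x y
  have hpq : p.toReal.HolderConjugate q.toReal := holderConjugate_toReal p hp hq
  rw [norm_toLp_eq_sum_rpow hpq.pos, norm_toLp_eq_sum_rpow hpq.symm.pos]
  exact Real.inner_le_Lp_mul_Lq _ x y hpq

theorem abs_dotProduct_le_norm_toLp_mul_norm_toLp [p.HolderConjugate q] (x y : ι → ℝ) :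
    |x ⬝ᵥ y| ≤ ‖WithLp.toLp p x‖ * ‖WithLp.toLp q y‖ := by
  have : Fact (1 ≤ p) := ⟨ENNReal.HolderConjugate.one_le p q⟩
  refine abs_le'.2 ⟨dotProduct_le_norm_toLp_mul_norm_toLp p x y, ?_⟩
  simpa only [neg_dotProduct, WithLp.toLp_neg, norm_neg] using
    dotProduct_le_norm_toLp_mul_norm_toLp p (-x) y

theorem abs_sign_le_one (a : ℝ) : |(SignType.sign a : ℝ)| ≤ 1 := by
  rcases lt_trichotomy a 0 with h | rfl | h <;> simp [*]

theorem exists_dotProduct_eq_norm_toLp_one (y : ι → ℝ) :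
    ∃ u : ι → ℝ, ‖WithLp.toLp ∞ u‖ ≤ 1 ∧ u ⬝ᵥ y = ‖WithLp.toLp 1 y‖ := by
  refine ⟨fun i ↦ SignType.sign (y i), ?_, ?_⟩
  · rw [PiLp.norm_eq_ciSup]
    exact Real.iSup_le (fun i ↦ abs_sign_le_one (y i)) zero_le_one
  · simp only [PiLp.norm_eq_of_L1, dotProduct, sign_mul_self, Real.norm_eq_abs]

theorem exists_dotProduct_eq_norm_toLp_top (y : ι → ℝ) :
    ∃ u : ι → ℝ, ‖WithLp.toLp 1 u‖ ≤ 1 ∧ u ⬝ᵥ y = ‖WithLp.toLp ∞ y‖ := by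
  classical
  rcases isEmpty_or_nonempty ι with _ | _
  · exact ⟨0, by simp, by simp [PiLp.norm_eq_ciSup]⟩
  obtain ⟨j, hj⟩ := exists_eq_ciSup_of_finite (f := fun i ↦ ‖y i‖)
  refine ⟨Pi.single j (SignType.sign (y j)), ?_, ?_⟩
  · exact (PiLp.norm_single 1 (fun _ ↦ ℝ) j _).trans_le (abs_sign_le_one (y j))
  · rw [single_dotProduct, sign_mul_self, PiLp.norm_eq_ciSup]
    exact hj

theorem exists_dotProduct_eq_norm_toLp_of_ne_top [p.HolderConjugate q] (hp : p ≠ ∞) (hq : q ≠ ∞)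
    (y : ι → ℝ) : ∃ u : ι → ℝ, ‖WithLp.toLp p u‖ ≤ 1 ∧ u ⬝ᵥ y = ‖WithLp.toLp q y‖ := by
  have hpq : p.toReal.HolderConjugate q.toReal := holderConjugate_toReal p hp hq
  obtain ⟨g, hg, hgy⟩ := (NNReal.isGreatest_Lp Finset.univ (fun i ↦ ‖y i‖₊) hpq.symm).1
  have hg' : ∑ i, (g i : ℝ) ^ p.toReal ≤ 1 := mod_cast hg
  have hgy' : ∑ i, |y i| * g i = (∑ i, |y i| ^ q.toReal) ^ (1 / q.toReal) := by
    simpa using congrArg NNReal.toReal hgy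
  refine ⟨fun i ↦ SignType.sign (y i) * g i, ?_, ?_⟩
  · rw [norm_toLp_eq_sum_rpow hpq.pos]
    refine Real.rpow_le_one (by positivity) (le_trans ?_ hg') (by positivity)
    gcongr with i
    rw [abs_mul, NNReal.abs_eq]
    exact mul_le_of_le_one_left (g i).2 (abs_sign_le_one (y i))
  · rw [norm_toLp_eq_sum_rpow hpq.symm.pos, ← hgy']
    exact Finset.sum_congr rfl fun i _ ↦ by rw [mul_right_comm, sign_mul_self]

theorem exists_dotProduct_eq_norm_toLp [p.HolderConjugate q] (y : ι → ℝ) :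
    ∃ u : ι → ℝ, ‖WithLp.toLp p u‖ ≤ 1 ∧ u ⬝ᵥ y = ‖WithLp.toLp q y‖ := by
  by_cases hp : p = ∞
  · obtain rfl : q = 1 := (ENNReal.HolderConjugate.eq_top_iff_eq_one p q).1 hp
    subst hp
    exact exists_dotProduct_eq_norm_toLp_one y
  by_cases hq : q = ∞
  · obtain rfl : p = 1 := (ENNReal.HolderConjugate.eq_top_iff_eq_one q p).1 hq
    subst hq
    exact exists_dotProduct_eq_norm_toLp_top y
  exact exists_dotProduct_eq_norm_toLp_of_ne_top p hp hq y

end LpDuality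

section LpNorm

variable {n : ℕ} {p q : ℝ≥0∞}

theorem lpNorm_eq_norm_toLp (hp : p ≠ 0) (x : Fin n → ℝ) : lpNorm p x = ‖WithLp.toLp p x‖ := by
  by_cases h : p = ∞
  · subst h
    simp [_root_.lpNorm, PiLp.norm_eq_ciSup]
  · simp [_root_.lpNorm, h, norm_toLp_eq_sum_rpow (ENNReal.toReal_pos hp h)]

theorem lpNorm_nonneg (p : ℝ≥0∞) (x : Fin n → ℝ) : 0 ≤ lpNorm p x := by
  unfold _root_.lpNorm
  split_ifs
  · exact Real.iSup_nonneg fun i ↦ abs_nonneg _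
  · positivity

theorem lpNorm_smul [Fact (1 ≤ p)] (a : ℝ) (x : Fin n → ℝ) :
    lpNorm p (a • x) = |a| * lpNorm p x := by
  have hp : p ≠ 0 := (zero_lt_one.trans_le Fact.out).ne'
  rw [lpNorm_eq_norm_toLp hp, lpNorm_eq_norm_toLp hp, WithLp.toLp_smul, norm_smul, Real.norm_eq_abs]

theorem lpNorm_add_le [Fact (1 ≤ p)] (x y : Fin n → ℝ) :
    lpNorm p (x + y) ≤ lpNorm p x + lpNorm p y := by
  have hp : p ≠ 0 := (zero_lt_one.trans_le Fact.out).ne'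
  simpa only [lpNorm_eq_norm_toLp hp, WithLp.toLp_add] using norm_add_le _ _

theorem continuous_lpNorm [Fact (1 ≤ p)] : Continuous fun x : Fin n → ℝ ↦ lpNorm p x := by
  have hp : p ≠ 0 := (zero_lt_one.trans_le Fact.out).ne'
  simpa only [lpNorm_eq_norm_toLp hp] using (PiLp.continuous_toLp p fun _ : Fin n ↦ ℝ).norm

theorem abs_apply_le_lpNorm [Fact (1 ≤ p)] (x : Fin n → ℝ) (i : Fin n) : |x i| ≤ lpNorm p x := by
  rw [lpNorm_eq_norm_toLp (zero_lt_one.trans_le Fact.out).ne']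
  exact PiLp.norm_apply_le (WithLp.toLp p x) i

theorem abs_ip_le [p.HolderConjugate q] (x v : Fin n → ℝ) :
    |ip x v| ≤ lpNorm p x * lpNorm q v := by
  rw [lpNorm_eq_norm_toLp (ENNReal.HolderConjugate.ne_zero p q),
    lpNorm_eq_norm_toLp (ENNReal.HolderConjugate.ne_zero q p)]
  exact abs_dotProduct_le_norm_toLp_mul_norm_toLp p x v

theorem exists_ip_eq_lpNorm (p : ℝ≥0∞) [p.HolderConjugate q] (v : Fin n → ℝ) :
    ∃ u : Fin n → ℝ, lpNorm p u ≤ 1 ∧ ip u v = lpNorm q v := by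
  simp only [lpNorm_eq_norm_toLp (ENNReal.HolderConjugate.ne_zero p q),
    lpNorm_eq_norm_toLp (ENNReal.HolderConjugate.ne_zero q p)]
  exact exists_dotProduct_eq_norm_toLp p v

theorem ip_comm (x y : Fin n → ℝ) : ip x y = ip y x :=
  dotProduct_comm x y

theorem ip_add_left (x y v : Fin n → ℝ) : ip (x + y) v = ip x v + ip y v :=
  add_dotProduct x y v

theorem ip_sub_left (x y v : Fin n → ℝ) : ip (x - y) v = ip x v - ip y v :=
  sub_dotProduct x y v

theorem ip_smul_left (a : ℝ) (x v : Fin n → ℝ) : ip (a • x) v = a * ip x v :=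
  smul_dotProduct a x v

end LpNorm

section Hinge

variable {n : ℕ} {p q : ℝ≥0∞} (v : Fin n → ℝ) (t : ℝ)

theorem hfun_nonneg (x : Fin n → ℝ) : 0 ≤ hfun v t x :=
  le_max_right _ _

theorem measurable_hfun : Measurable (hfun v t) := by
  unfold hfun ip
  fun_prop

theorem hfun_le_hfun_add [p.HolderConjugate q] (x y : Fin n → ℝ) :
    hfun v t y ≤ hfun v t x + lpNorm q v * lpNorm p (x - y) := by
  have hinge : |hfun v t x - hfun v t y| ≤ |ip x v - ip y v| := by
    simpa only [hfun, sub_sub_sub_cancel_right] using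
      abs_max_sub_max_le_abs (ip x v - t) (ip y v - t) 0
  have holder : |ip x v - ip y v| ≤ lpNorm q v * lpNorm p (x - y) := by
    rw [← ip_sub_left, mul_comm]
    exact abs_ip_le (x - y) v
  linarith [neg_abs_le (hfun v t x - hfun v t y)]

theorem integrable_ip [Fact (1 ≤ p)] {μ : Measure (Fin n → ℝ)}
    (hμ : Integrable (fun x ↦ lpNorm p x) μ) : Integrable (fun x ↦ ip x v) μ :=
  integrable_finsetSum _ fun i _ ↦ Integrable.mul_const
    (hμ.mono' (measurable_pi_apply i).aestronglyMeasurable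
      (.of_forall fun x ↦ abs_apply_le_lpNorm x i)) (v i)

theorem integrable_hfun [Fact (1 ≤ p)] {μ : Measure (Fin n → ℝ)} [IsFiniteMeasure μ]
    (hμ : Integrable (fun x ↦ lpNorm p x) μ) : Integrable (hfun v t) μ :=
  ((integrable_ip v hμ).sub (integrable_const t)).pos_part

end Hinge

section Transport

variable {n : ℕ} {p : ℝ≥0∞} {μ ν : Measure (Fin n → ℝ)}

/-- `K` is a coupling of `μ` and `ν`: a probability measure on `ℝⁿ × ℝⁿ` with marginals `μ`
and `ν`. These are the transport plans over which `dW` minimizes. -/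
def IsCoupling (K : Measure ((Fin n → ℝ) × (Fin n → ℝ))) (μ ν : Measure (Fin n → ℝ)) : Prop :=
  IsProbabilityMeasure K ∧ K.map Prod.fst = μ ∧ K.map Prod.snd = ν

theorem isCoupling_prod [IsProbabilityMeasure μ] [IsProbabilityMeasure ν] :
    IsCoupling (μ.prod ν) μ ν :=
  ⟨inferInstance, by simp, by simp⟩

theorem dW_eq_iInf_isCoupling (p : ℝ≥0∞) (μ ν : Measure (Fin n → ℝ)) :
    dW p μ ν = ⨅ K : {K // IsCoupling K μ ν},
      ∫⁻ z, ENNReal.ofReal (lpNorm p (z.1 - z.2)) ∂K.1 := by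
  simp only [dW, iInf_subtype, IsCoupling, iInf_and]

theorem IsCoupling.dW_le {K : Measure ((Fin n → ℝ) × (Fin n → ℝ))} (hK : IsCoupling K μ ν) :
    dW p μ ν ≤ ∫⁻ z, ENNReal.ofReal (lpNorm p (z.1 - z.2)) ∂K := by
  rw [dW_eq_iInf_isCoupling]
  exact iInf_le _ (⟨K, hK⟩ : {K // IsCoupling K μ ν})

theorem IsCoupling.lintegral_le {K : Measure ((Fin n → ℝ) × (Fin n → ℝ))}
    (hK : IsCoupling K μ ν) {f : (Fin n → ℝ) → ℝ≥0∞} (hf : Measurable f) {L : ℝ≥0∞} (hL : L ≠ ∞)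
    (hfL : ∀ x y, f y ≤ f x + L * ENNReal.ofReal (lpNorm p (x - y))) :
    ∫⁻ y, f y ∂ν ≤ ∫⁻ x, f x ∂μ + L * ∫⁻ z, ENNReal.ofReal (lpNorm p (z.1 - z.2)) ∂K :=
  calc ∫⁻ y, f y ∂ν = ∫⁻ z, f z.2 ∂K := by rw [← hK.2.2, lintegral_map hf measurable_snd]
    _ ≤ ∫⁻ z, f z.1 + L * ENNReal.ofReal (lpNorm p (z.1 - z.2)) ∂K :=
      lintegral_mono fun z ↦ hfL z.1 z.2
    _ = ∫⁻ z, f z.1 ∂K + L * ∫⁻ z, ENNReal.ofReal (lpNorm p (z.1 - z.2)) ∂K := by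
      rw [lintegral_add_left (f := fun z : (Fin n → ℝ) × (Fin n → ℝ) ↦ f z.1)
        (hf.comp measurable_fst), lintegral_const_mul' _ _ hL]
    _ = _ := by rw [← hK.2.1, lintegral_map hf measurable_fst]

theorem lintegral_le_lintegral_add_dW [IsProbabilityMeasure μ] [IsProbabilityMeasure ν]
    {f : (Fin n → ℝ) → ℝ≥0∞} (hf : Measurable f) {L : ℝ≥0∞} (hL : L ≠ ∞)
    (hfL : ∀ x y, f y ≤ f x + L * ENNReal.ofReal (lpNorm p (x - y))) :
    ∫⁻ y, f y ∂ν ≤ ∫⁻ x, f x ∂μ + L * dW p μ ν := by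
  have : Nonempty {K // IsCoupling K μ ν} := ⟨⟨μ.prod ν, isCoupling_prod⟩⟩
  rw [dW_eq_iInf_isCoupling, ENNReal.mul_iInf fun h ↦ absurd h hL, ENNReal.add_iInf]
  exact le_iInf fun K ↦ K.2.lintegral_le hf hL hfL

theorem integral_le_integral_add_of_dW_le [IsProbabilityMeasure μ] [IsProbabilityMeasure ν]
    {f : (Fin n → ℝ) → ℝ} (hf : Measurable f) (hf₀ : ∀ x, 0 ≤ f x) (hfμ : Integrable f μ)
    {L ε : ℝ} (hL : 0 ≤ L) (hε : 0 ≤ ε) (hfL : ∀ x y, f y ≤ f x + L * lpNorm p (x - y))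
    (hd : dW p μ ν ≤ ENNReal.ofReal ε) :
    ∫ y, f y ∂ν ≤ ∫ x, f x ∂μ + L * ε := by
  have hfμ₀ : 0 ≤ ∫ x, f x ∂μ := integral_nonneg hf₀
  have lipschitz (x y : Fin n → ℝ) : ENNReal.ofReal (f y) ≤
      ENNReal.ofReal (f x) + ENNReal.ofReal L * ENNReal.ofReal (lpNorm p (x - y)) := by
    rw [← ENNReal.ofReal_mul hL,
      ← ENNReal.ofReal_add (hf₀ x) (mul_nonneg hL (lpNorm_nonneg p _))]
    exact ENNReal.ofReal_le_ofReal (hfL x y)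
  rw [integral_eq_lintegral_of_nonneg_ae (.of_forall hf₀) hf.aestronglyMeasurable]
  refine ENNReal.toReal_le_of_le_ofReal (by positivity) ?_
  calc ∫⁻ y, ENNReal.ofReal (f y) ∂ν
      ≤ ∫⁻ x, ENNReal.ofReal (f x) ∂μ + ENNReal.ofReal L * dW p μ ν :=
        lintegral_le_lintegral_add_dW hf.ennreal_ofReal ENNReal.ofReal_ne_top lipschitz
    _ ≤ ENNReal.ofReal (∫ x, f x ∂μ) + ENNReal.ofReal L * ENNReal.ofReal ε := by
        rw [ofReal_integral_eq_lintegral_ofReal hfμ (.of_forall hf₀)]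
        gcongr
    _ = ENNReal.ofReal (∫ x, f x ∂μ + L * ε) := by
        rw [← ENNReal.ofReal_mul hL, ← ENNReal.ofReal_add hfμ₀ (by positivity)]

end Transport

section TranslationMixture

/-- The mixture `(1 - δ) μ + δ τ_w μ` of a measure and its translate by `w`. Moving a small
fraction `δ` of the mass very far, by `w` of order `1 / δ`, produces the nearly worst
distributions of a Wasserstein ball. Meaningful for `δ ∈ [0, 1]`, since the real weights are
truncated at `0`. -/
noncomputable def translationMixture {E : Type*} [MeasurableSpace E] [Add E] (δ : ℝ) (w : E)
    (μ : Measure E) : Measure E :=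
  ENNReal.ofReal (1 - δ) • μ + ENNReal.ofReal δ • μ.map (· + w)

variable {E F : Type*} [MeasurableSpace E] [MeasurableSpace F] {δ : ℝ} {w : E} {μ : Measure E}

theorem ofReal_one_sub_add_ofReal (hδ₀ : 0 ≤ δ) (hδ₁ : δ ≤ 1) :
    ENNReal.ofReal (1 - δ) + ENNReal.ofReal δ = 1 := by
  rw [← ENNReal.ofReal_add (sub_nonneg.2 hδ₁) hδ₀, sub_add_cancel, ENNReal.ofReal_one]

theorem translationMixture_zero [AddZeroClass E] (hδ₀ : 0 ≤ δ) (hδ₁ : δ ≤ 1) :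
    translationMixture δ 0 μ = μ := by
  simp only [translationMixture, add_zero, Measure.map_id', ← add_smul,
    ofReal_one_sub_add_ofReal hδ₀ hδ₁, one_smul]

theorem isProbabilityMeasure_translationMixture [Add E] [MeasurableAdd E]
    [IsProbabilityMeasure μ] (hδ₀ : 0 ≤ δ) (hδ₁ : δ ≤ 1) :
    IsProbabilityMeasure (translationMixture δ w μ) := by
  have := Measure.isProbabilityMeasure_map (μ := μ) (measurable_add_const w).aemeasurable
  exact ⟨by simp [translationMixture, ofReal_one_sub_add_ofReal hδ₀ hδ₁]⟩

theorem map_translationMixture [AddZeroClass E] [MeasurableAdd E] [AddZeroClass F]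
    [MeasurableAdd F] (L : E →+ F) (hL : Measurable L) :
    (translationMixture δ w μ).map L = translationMixture δ (L w) (μ.map L) := by
  have hcomm : L ∘ (· + w) = (· + L w) ∘ L := funext fun x ↦ map_add L x w
  simp only [translationMixture, Measure.map_add _ _ hL, Measure.map_smul,
    Measure.map_map hL (measurable_add_const w), Measure.map_map (measurable_add_const (L w)) hL,
    hcomm]

theorem lintegral_translationMixture [Add E] [MeasurableAdd E] {f : E → ℝ≥0∞}
    (hf : Measurable f) :
    ∫⁻ x, f x ∂(translationMixture δ w μ) =
      ENNReal.ofReal (1 - δ) * ∫⁻ x, f x ∂μ + ENNReal.ofReal δ * ∫⁻ x, f (x + w) ∂μ := by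
  rw [translationMixture, lintegral_add_measure, lintegral_smul_measure, lintegral_smul_measure,
    lintegral_map hf (measurable_add_const w), smul_eq_mul, smul_eq_mul]

theorem integrable_translationMixture [Add E] {f : E → ℝ} (hf : Integrable f μ)
    (hfw : Integrable f (μ.map (· + w))) : Integrable f (translationMixture δ w μ) :=
  (hf.smul_measure ENNReal.ofReal_ne_top).add_measure (hfw.smul_measure ENNReal.ofReal_ne_top)

theorem integral_translationMixture [Add E] [MeasurableAdd E] {f : E → ℝ} (hδ₀ : 0 ≤ δ)
    (hδ₁ : δ ≤ 1) (hf : Integrable f μ) (hfw : Integrable f (μ.map (· + w))) :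
    ∫ x, f x ∂(translationMixture δ w μ) =
      (1 - δ) * ∫ x, f x ∂μ + δ * ∫ x, f (x + w) ∂μ := by
  rw [translationMixture, integral_add_measure (hf.smul_measure ENNReal.ofReal_ne_top)
      (hfw.smul_measure ENNReal.ofReal_ne_top), integral_smul_measure, integral_smul_measure,
    ENNReal.toReal_ofReal (sub_nonneg.2 hδ₁), ENNReal.toReal_ofReal hδ₀,
    integral_map (measurable_add_const w).aemeasurable hfw.aestronglyMeasurable,
    smul_eq_mul, smul_eq_mul]

end TranslationMixture

section WassersteinBall

variable {n : ℕ} {p : ℝ≥0∞} {μ : Measure (Fin n → ℝ)} {δ ε : ℝ} {w : Fin n → ℝ}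

/-- The Wasserstein ball of radius `ε` around `μ`, within the probability measures with finite
first moment: the ambiguity set over which `Wobj` takes its supremum. -/
def wassersteinBall (p : ℝ≥0∞) (μ : Measure (Fin n → ℝ)) (ε : ℝ) : Set (Measure (Fin n → ℝ)) :=
  {ν | IsProbabilityMeasure ν ∧ Integrable (fun x ↦ lpNorm p x) ν ∧ dW p μ ν ≤ ENNReal.ofReal ε}

theorem integrable_lpNorm_map_add_const [Fact (1 ≤ p)] [IsFiniteMeasure μ]
    (hμ : Integrable (fun x ↦ lpNorm p x) μ) :
    Integrable (fun x ↦ lpNorm p x) (μ.map (· + w)) := by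
  rw [integrable_map_measure continuous_lpNorm.aestronglyMeasurable
    (measurable_add_const w).aemeasurable]
  refine (hμ.add (integrable_const (lpNorm p w))).mono'
    (continuous_lpNorm.comp (continuous_add_const w)).aestronglyMeasurable (.of_forall fun x ↦ ?_)
  simpa only [Function.comp_apply, Pi.add_apply, Real.norm_of_nonneg (lpNorm_nonneg p _)] using
    lpNorm_add_le x w

-- Couple `x` with `x + w` on the moved mass and with itself elsewhere: this is the mixture of
-- the diagonal coupling with its translate by `(0, w)`.
theorem isCoupling_translationMixture [IsProbabilityMeasure μ] (hδ₀ : 0 ≤ δ) (hδ₁ : δ ≤ 1) :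
    IsCoupling (translationMixture δ ((0 : Fin n → ℝ), w) (μ.map fun x ↦ (x, x))) μ
      (translationMixture δ w μ) := by
  have hdiag : Measurable fun x : Fin n → ℝ ↦ (x, x) := by fun_prop
  have := Measure.isProbabilityMeasure_map (μ := μ) hdiag.aemeasurable
  refine ⟨isProbabilityMeasure_translationMixture hδ₀ hδ₁, ?_, ?_⟩
  · have h := map_translationMixture (δ := δ) (w := ((0 : Fin n → ℝ), w))
      (μ := μ.map fun x ↦ (x, x)) (AddMonoidHom.fst _ _) measurable_fst
    simpa [Measure.map_map measurable_fst hdiag, Function.comp_def,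
      translationMixture_zero hδ₀ hδ₁] using h
  · have h := map_translationMixture (δ := δ) (w := ((0 : Fin n → ℝ), w))
      (μ := μ.map fun x ↦ (x, x)) (AddMonoidHom.snd _ _) measurable_snd
    simpa [Measure.map_map measurable_snd hdiag, Function.comp_def] using h

theorem dW_translationMixture_le [Fact (1 ≤ p)] [IsProbabilityMeasure μ] (hδ₀ : 0 ≤ δ)
    (hδ₁ : δ ≤ 1) : dW p μ (translationMixture δ w μ) ≤ ENNReal.ofReal (δ * lpNorm p w) := by
  have hcost : Measurable fun z : (Fin n → ℝ) × (Fin n → ℝ) ↦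
      ENNReal.ofReal (lpNorm p (z.1 - z.2)) :=
    (continuous_lpNorm.comp (by fun_prop)).measurable.ennreal_ofReal
  refine (isCoupling_translationMixture hδ₀ hδ₁).dW_le.trans_eq ?_
  have hcost_add : Measurable fun z : (Fin n → ℝ) × (Fin n → ℝ) ↦
      ENNReal.ofReal (lpNorm p ((z + (0, w)).1 - (z + (0, w)).2)) :=
    hcost.comp (measurable_add_const _)
  rw [lintegral_translationMixture hcost, lintegral_map hcost (by fun_prop),
    lintegral_map hcost_add (by fun_prop)]
  simp [lpNorm_eq_norm_toLp (zero_lt_one.trans_le (Fact.out : 1 ≤ p)).ne',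
    ENNReal.ofReal_mul hδ₀]

theorem translationMixture_mem_wassersteinBall [Fact (1 ≤ p)] [IsProbabilityMeasure μ]
    (hμ : Integrable (fun x ↦ lpNorm p x) μ) (hδ₀ : 0 ≤ δ) (hδ₁ : δ ≤ 1)
    (hw : δ * lpNorm p w ≤ ε) : translationMixture δ w μ ∈ wassersteinBall p μ ε :=
  ⟨isProbabilityMeasure_translationMixture hδ₀ hδ₁,
    integrable_translationMixture hμ (integrable_lpNorm_map_add_const hμ),
    (dW_translationMixture_le hδ₀ hδ₁).trans (ENNReal.ofReal_le_ofReal hw)⟩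

end WassersteinBall

section WorstCase

variable {n : ℕ} {p q : ℝ≥0∞} {μ : Measure (Fin n → ℝ)}
  [IsProbabilityMeasure μ] {δ ε : ℝ} (v : Fin n → ℝ) (t : ℝ)

theorem le_integral_hfun_translationMixture [Fact (1 ≤ p)]
    (hμ : Integrable (fun x ↦ lpNorm p x) μ) (hδ₀ : 0 ≤ δ) (hδ₁ : δ ≤ 1) (w : Fin n → ℝ) :
    (1 - δ) * ∫ x, hfun v t x ∂μ + δ * ∫ x, (ip x v - t) ∂μ + δ * ip w v ≤
      ∫ x, hfun v t x ∂(translationMixture δ w μ) := by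
  have := Measure.isProbabilityMeasure_map (μ := μ) (measurable_add_const w).aemeasurable
  have hint := integrable_hfun v t hμ
  have hintw := integrable_hfun v t (integrable_lpNorm_map_add_const (w := w) hμ)
  have haff : Integrable (fun x ↦ ip x v - t) μ :=
    (integrable_ip v hμ).sub (integrable_const t)
  have translate : ∫ x, (ip x v - t) ∂μ + ip w v ≤ ∫ x, hfun v t (x + w) ∂μ := by
    calc ∫ x, (ip x v - t) ∂μ + ip w v = ∫ x, ((ip x v - t) + ip w v) ∂μ := by
          simp [integral_add haff (integrable_const _)]
      _ ≤ ∫ x, hfun v t (x + w) ∂μ := by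
          refine integral_mono (haff.add (integrable_const _))
            (hintw.comp_measurable (measurable_add_const w)) fun x ↦ ?_
          refine le_trans (le_of_eq ?_) (le_max_left _ _)
          rw [ip_add_left]
          ring
  rw [integral_translationMixture hδ₀ hδ₁ hint hintw, add_assoc, ← mul_add]
  gcongr

theorem integral_hfun_le_of_mem_wassersteinBall [p.HolderConjugate q]
    (hμ : Integrable (fun x ↦ lpNorm p x) μ) (hε : 0 ≤ ε) {ν : Measure (Fin n → ℝ)}
    (hν : ν ∈ wassersteinBall p μ ε) :
    ∫ x, hfun v t x ∂ν ≤ ∫ x, hfun v t x ∂μ + lpNorm q v * ε :=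
  have : Fact (1 ≤ p) := ⟨ENNReal.HolderConjugate.one_le p q⟩
  have := hν.1
  integral_le_integral_add_of_dW_le (measurable_hfun v t) (hfun_nonneg v t)
    (integrable_hfun v t hμ) (lpNorm_nonneg q v) hε (hfun_le_hfun_add v t) hν.2.2

theorem isLUB_integral_hfun_wassersteinBall [p.HolderConjugate q]
    (hμ : Integrable (fun x ↦ lpNorm p x) μ) (hε : 0 ≤ ε) :
    IsLUB ((fun ν ↦ ∫ x, hfun v t x ∂ν) '' wassersteinBall p μ ε)
      (∫ x, hfun v t x ∂μ + lpNorm q v * ε) := by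
  have : Fact (1 ≤ p) := ⟨ENNReal.HolderConjugate.one_le p q⟩
  refine ⟨Set.forall_mem_image.2 fun ν ↦ integral_hfun_le_of_mem_wassersteinBall v t hμ hε,
    fun S hS ↦ ?_⟩
  obtain ⟨u, hu, huv⟩ := exists_ip_eq_lpNorm (q := q) p v
  set A := ∫ x, hfun v t x ∂μ
  set B := ∫ x, (ip x v - t) ∂μ
  have perturbed : ∀ δ ∈ Set.Ioc (0 : ℝ) 1, (1 - δ) * A + δ * B + lpNorm q v * ε ≤ S := by
    rintro δ ⟨hδ₀, hδ₁⟩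
    have hdist : δ * lpNorm p ((ε / δ) • u) ≤ ε := by
      rw [lpNorm_smul, abs_of_nonneg (by positivity), ← mul_assoc, mul_div_cancel₀ _ hδ₀.ne']
      exact mul_le_of_le_one_right hε hu
    calc (1 - δ) * A + δ * B + lpNorm q v * ε
        = (1 - δ) * A + δ * B + δ * ip ((ε / δ) • u) v := by
          rw [ip_smul_left, huv]
          field_simp
      _ ≤ ∫ x, hfun v t x ∂(translationMixture δ ((ε / δ) • u) μ) :=
          le_integral_hfun_translationMixture v t hμ hδ₀.le hδ₁ _
      _ ≤ S := hS <| Set.mem_image_of_mem _ <|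
          translationMixture_mem_wassersteinBall hμ hδ₀.le hδ₁ hdist
  have limit : Tendsto (fun δ : ℝ ↦ (1 - δ) * A + δ * B + lpNorm q v * ε) (𝓝[>] 0)
      (𝓝 (A + lpNorm q v * ε)) := by
    have hcont : Continuous fun δ : ℝ ↦ (1 - δ) * A + δ * B + lpNorm q v * ε := by fun_prop
    simpa using (hcont.tendsto 0).mono_left nhdsWithin_le_nhds
  exact le_of_tendsto limit (mem_of_superset (Ioc_mem_nhdsGT zero_lt_one) perturbed)

end WorstCase

section Empirical

variable {n N : ℕ} (ξ : Fin N → Fin n → ℝ)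

instance isProbabilityMeasure_empirical [NeZero N] : IsProbabilityMeasure (empirical N ξ) :=
  ⟨by simpa [empirical] using
    ENNReal.inv_mul_cancel (Nat.cast_ne_zero.2 (NeZero.ne N)) (ENNReal.natCast_ne_top N)⟩

theorem integrable_empirical [NeZero N] (f : (Fin n → ℝ) → ℝ) : Integrable f (empirical N ξ) :=
  (integrable_finsetSum_measure.2 fun _ _ ↦ integrable_dirac (by simp)).smul_measure
    (by simp [NeZero.ne N])

theorem integral_empirical (f : (Fin n → ℝ) → ℝ) :
    ∫ x, f x ∂(empirical N ξ) = (1 / (N : ℝ)) * ∑ i, f (ξ i) := by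
  rw [empirical, integral_smul_measure,
    integral_finsetSum_measure fun _ _ ↦ integrable_dirac (by simp)]
  simp

end Empirical

section Reformulation

variable {n N : ℕ} [NeZero N] {p q : ℝ≥0∞} [p.HolderConjugate q] {α ε : ℝ}
  (ξ : Fin N → Fin n → ℝ) (v : Fin n → ℝ) (t : ℝ)

theorem Wobj_eq (hε : 0 ≤ ε) :
    Wobj p α ε N ξ v t =
      t + (1 / α) * ((1 / (N : ℝ)) * ∑ i, hfun v t (ξ i) + lpNorm q v * ε) := by
  have hLUB := isLUB_integral_hfun_wassersteinBall (p := p) (q := q) v t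
    (integrable_empirical ξ fun x ↦ lpNorm p x) hε
  rw [← integral_empirical, ← hLUB.csSup_eq hLUB.nonempty]
  simp only [Wobj, wassersteinBall, Set.image, Set.mem_ofPred_eq, and_assoc, eq_comm]

theorem Wobj_le_of_feasible (hα : 0 ≤ α) (hε : 0 ≤ ε) {s : Fin N → ℝ} {lam : ℝ}
    (hs : ∀ i, ip v (ξ i) - t ≤ s i ∧ 0 ≤ s i) (hlam : lpNorm q v ≤ lam) :
    Wobj p α ε N ξ v t ≤ t + (1 / α) * ((1 / (N : ℝ)) * ∑ i, s i + lam * ε) := by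
  rw [Wobj_eq (q := q) ξ v t hε]
  gcongr with i
  rw [hfun, ip_comm]
  exact max_le (hs i).1 (hs i).2

end Reformulation

theorem stmt17_general {n N : ℕ} [NeZero N] {p q : ℝ≥0∞} [p.HolderConjugate q]
    (f : (Fin n → ℝ) → ℝ) {α : ℝ} (hα : 0 < α) {ε : ℝ} (hε : 0 ≤ ε) (ξ : Fin N → Fin n → ℝ)
    (P : Set (Fin n → ℝ)) {l : ℝ} (hl : 0 ≤ l)
    (pbar : Fin n → ℝ) (tbar : ℝ) (sbar : Fin N → ℝ) (lambar : ℝ)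
    (hbar_feas : (∀ i, ip pbar (ξ i) - tbar ≤ sbar i ∧ 0 ≤ sbar i) ∧ lpNorm q pbar ≤ lambar)
    (hbar_min : ∀ (pp : Fin n → ℝ) (t : ℝ) (s : Fin N → ℝ) (lam : ℝ),
      pp ∈ P → (∀ i, ip pp (ξ i) - t ≤ s i ∧ 0 ≤ s i) → lpNorm q pp ≤ lam →
      f pbar + l * (tbar + (1 / α) * ((1 / (N : ℝ)) * ∑ i, sbar i + lambar * ε)) ≤
        f pp + l * (t + (1 / α) * ((1 / (N : ℝ)) * ∑ i, s i + lam * ε))) :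
    ∀ pp ∈ P, ∀ t : ℝ,
      f pbar + l * Wobj p α ε N ξ pbar tbar ≤ f pp + l * Wobj p α ε N ξ pp t := by
  intro pp hpp t
  calc f pbar + l * Wobj p α ε N ξ pbar tbar
      ≤ f pbar + l * (tbar + (1 / α) * ((1 / (N : ℝ)) * ∑ i, sbar i + lambar * ε)) := by
        gcongr
        exact Wobj_le_of_feasible ξ pbar tbar hα.le hε hbar_feas.1 hbar_feas.2
    _ ≤ f pp + l * (t + (1 / α) *
          ((1 / (N : ℝ)) * ∑ i, hfun pp t (ξ i) + lpNorm q pp * ε)) :=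
        hbar_min pp t (fun i ↦ hfun pp t (ξ i)) (lpNorm q pp) hpp
          (fun i ↦ ⟨ip_comm pp (ξ i) ▸ le_max_left _ _, hfun_nonneg pp t (ξ i)⟩) le_rfl
    _ = f pp + l * Wobj p α ε N ξ pp t := by rw [Wobj_eq (q := q) ξ pp t hε]

/-- Corollary 1, DR bi-criteria shortest path via scalarization: any optimal
solution `(p̄,t̄,s̄,λ̄)` of the scalarized convex program yields a weakly robust efficient pair
`(p̄,t̄)` of the DR bi-criteria shortest path problem. -/
theorem stmt17 (n : ℕ) (hn : 1 ≤ n) (p q : ℝ≥0∞) (hp : 1 ≤ p) (hpq : 1 / p + 1 / q = 1)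
    (c : Fin n → ℝ) (α : ℝ) (hα : 0 < α) (hα1 : α ≤ 1) (ε : ℝ) (hε : 0 ≤ ε)
    (N : ℕ) (hN : 1 ≤ N) (ξ : Fin N → Fin n → ℝ)
    (P : Set (Fin n → ℝ)) (hPne : P.Nonempty) (hP01 : ∀ v ∈ P, ∀ i, v i = 0 ∨ v i = 1)
    (l₁ l₂ : ℝ) (hl₁ : 0 ≤ l₁) (hl₂ : 0 ≤ l₂) (hl : l₁ + l₂ ≠ 0)
    (pbar : Fin n → ℝ) (tbar : ℝ) (sbar : Fin N → ℝ) (lambar : ℝ)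
    (hbar_mem : pbar ∈ P)
    (hbar_feas : (∀ i, ip pbar (ξ i) - tbar ≤ sbar i ∧ 0 ≤ sbar i) ∧ lpNorm q pbar ≤ lambar)
    (hbar_min : ∀ (pp : Fin n → ℝ) (t : ℝ) (s : Fin N → ℝ) (lam : ℝ),
      pp ∈ P → (∀ i, ip pp (ξ i) - t ≤ s i ∧ 0 ≤ s i) → lpNorm q pp ≤ lam →
      l₁ * ip c pbar + l₂ * (tbar + (1 / α) * ((1 / (N : ℝ)) * ∑ i, sbar i + lambar * ε)) ≤
        l₁ * ip c pp + l₂ * (t + (1 / α) * ((1 / (N : ℝ)) * ∑ i, s i + lam * ε))) :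
    ∀ pp ∈ P, ∀ t : ℝ,
      l₁ * ip c pbar + l₂ * Wobj p α ε N ξ pbar tbar ≤
        l₁ * ip c pp + l₂ * Wobj p α ε N ξ pp t := by
  have : p.HolderConjugate q := ENNReal.holderConjugate_iff.2 (by simpa using hpq)
  have : NeZero N := ⟨by lia⟩
  exact stmt17_general (fun v ↦ l₁ * ip c v) hα hε ξ P hl₂ pbar tbar sbar lambar hbar_feas
    hbar_min
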